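/- Let 1 ≤ p < q ≤ m with 1 < q − p < m − 1, and let (β_S)_{S⊆N} be the probabilistic ballots of a (p, q)-PFBR on [D_≺(p, q)]^n which is anonymous (β_S = β_{S′} for all nonempty S, S′ ⊆ N with |S| = |S′|, so every conditional dictatorial coefficient equals 1/n) and satisfies per-capita monotonicity w.r.t. a_p and a_q. Define α = min over nonempty S ⊂ N of min( β_S(b̂_S^R)/|S| , β_S(b̂_S^L)/(n − |S|) ), and suppose 0 < α < 1/n. For every S ⊆ N define γ_S = (|S|/n) e_{b̂_S^R} + ((n − |S|)/n) e_{b̂_S^L} (so γ_N = e_{a_m} and γ_∅ = e_{a_1}) and β̂_S = (β_S − α n γ_S)/(1 − α n). Then: (a) every β̂_S is a lottery over A; (b) the collection (β̂_S)_{S⊆N} satisfies ballot unanimity, monotonicity, the constrained random-dictatorship condition w.r.t. a_p and a_q with every coefficient equal to 1/n, and per-capita monotonicity w.r.t. a_p and a_q; and (c) supp(β̂_S) ⊆ supp(β_S) for every nonempty S ⊂ N, with strict inclusion for at least one nonempty S* ⊂ N. -/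

import Mathlib

open Finset

noncomputable section

/-- A preference is a linear order over the `m` alternatives, represented as a bijection
from rank positions (0-based: position `0` is the top) to alternatives. -/
abbrev Pref (m : ℕ) := Fin m ≃ Fin m

namespace PFBRPaper

variable {m n : ℕ}

/-- `a` is strictly preferred to `b` under `P`. -/
def Prefers (P : Pref m) (a b : Fin m) : Prop := P.symm a < P.symm b

/-- The last alternative `a_m` (0-based index `m-1`). -/
def lastAlt (m : ℕ) [NeZero m] : Fin m :=
  ⟨m - 1, Nat.sub_lt (Nat.pos_of_ne_zero (NeZero.ne m)) Nat.one_pos⟩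

/-- Every alternative is top-ranked by some preference in the domain. -/
def MinimallyRich [NeZero m] (D : Set (Pref m)) : Prop :=
  ∀ a : Fin m, ∃ P ∈ D, P 0 = a

/-- The preference ranking `a_m` first, ..., `a_1` last. -/
def revPref (m : ℕ) : Pref m :=
  ⟨Fin.rev, Fin.rev, fun i => Fin.rev_rev i, fun i => Fin.rev_rev i⟩

/-- Diversity, with the labeling convention: the domain contains the preference ranking
`a_1` first, `a_2` second, ..., `a_m` last (the identity), together with its
complete reversal. -/
def Diversity (D : Set (Pref m)) : Prop :=
  Equiv.refl (Fin m) ∈ D ∧ revPref m ∈ D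

/-- Two preferences are adjacent: the alternatives at two contiguous rank positions are
swapped and everything else is unchanged. -/
def Adjacent (P P' : Pref m) : Prop :=
  P ≠ P' ∧ ∃ k : ℕ, ∃ hk : k + 1 < m,
    P ⟨k, Nat.lt_of_succ_lt hk⟩ = P' ⟨k + 1, hk⟩ ∧
    P ⟨k + 1, hk⟩ = P' ⟨k, Nat.lt_of_succ_lt hk⟩ ∧
    ∀ l : Fin m, (l : ℕ) ≠ k → (l : ℕ) ≠ k + 1 → P l = P' l

/-- `π 0, …, π (v-1)` is a path in `D` connecting `P` and `P'`. -/
def IsPath (D : Set (Pref m)) (P P' : Pref m) (π : ℕ → Pref m) (v : ℕ) : Prop :=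
  1 ≤ v ∧ (∀ i < v, π i ∈ D) ∧
  (∀ i < v, ∀ j < v, π i = π j → i = j) ∧
  π 0 = P ∧ π (v - 1) = P' ∧
  ∀ i, i + 1 < v → Adjacent (π i) (π (i + 1))

/-- The path `π 0, …, π (v-1)` has no `{a,b}`-restoration: the relative ranking of
`a` and `b` switches at most once along the path. -/
def NoRestoration (π : ℕ → Pref m) (v : ℕ) (a b : Fin m) : Prop :=
  ∀ i j k : ℕ, i < j → j < k → k < v →
    ¬(Prefers (π i) a b ∧ Prefers (π j) b a ∧ Prefers (π k) a b) ∧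
    ¬(Prefers (π i) b a ∧ Prefers (π j) a b ∧ Prefers (π k) b a)

def NoRestorationDomain (D : Set (Pref m)) : Prop :=
  ∀ P ∈ D, ∀ P' ∈ D, P ≠ P' → ∀ a b : Fin m,
    ∃ π v, IsPath D P P' π v ∧ NoRestoration π v a b

def RegularDomain [NeZero m] (D : Set (Pref m)) : Prop :=
  MinimallyRich D ∧ Diversity D ∧ NoRestorationDomain D

/-- `a ≈ b`: the two alternatives are strongly connected in the domain `D`. -/
def StronglyConnected [NeZero m] (D : Set (Pref m)) (a b : Fin m) : Prop :=
  a ≠ b ∧ ∃ P ∈ D, ∃ P' ∈ D,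
    P 0 = a ∧ P 1 = b ∧ P' 0 = b ∧ P' 1 = a ∧
    ∀ k : Fin m, 2 ≤ (k : ℕ) → P k = P' k

/-- `l` is a vertex-path of the graph `G_≈^B(D)`. -/
def IsVertexPathOn [NeZero m] (D : Set (Pref m)) (B : Set (Fin m)) (l : List (Fin m)) : Prop :=
  l ≠ [] ∧ l.Nodup ∧ (∀ x ∈ l, x ∈ B) ∧ l.Chain' (StronglyConnected D)

/-- `l` is a vertex-path of `G_≈^B(D)` connecting `a` and `b`. -/
def VertexPathBetween [NeZero m] (D : Set (Pref m)) (B : Set (Fin m)) (a b : Fin m)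
    (l : List (Fin m)) : Prop :=
  IsVertexPathOn D B l ∧ l.head? = some a ∧ l.getLast? = some b

/-- `a` is a leaf of the subgraph `G_≈^B(D)`. -/
def IsLeaf [NeZero m] (D : Set (Pref m)) (B : Set (Fin m)) (a : Fin m) : Prop :=
  a ∈ B ∧ ∃! b : Fin m, b ∈ B ∧ StronglyConnected D a b

/-- Single-peakedness w.r.t. the natural order. -/
def SinglePeaked [NeZero m] (P : Pref m) : Prop :=
  ∀ a b : Fin m, ((a < b ∧ b < P 0) ∨ (P 0 < b ∧ b < a)) → Prefers P b a

/-- A `(p,q)`-hybrid preference (thresholds `p < q`, 0-based). -/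
def IsHybridPref [NeZero m] (p q : Fin m) (P : Pref m) : Prop :=
  (∀ r s : Fin m, ((r ≤ p ∧ s ≤ p) ∨ (q ≤ r ∧ q ≤ s)) →
      ((r < s ∧ s < P 0) ∨ (P 0 < s ∧ s < r)) → Prefers P s r) ∧
  (P 0 ≤ p → ∀ l : Fin m, p ≤ l → l ≤ q → l ≠ p → Prefers P p l) ∧
  (q ≤ P 0 → ∀ l : Fin m, p ≤ l → l ≤ q → l ≠ q → Prefers P q l)

/-- The `(p,q)`-hybrid domain of all `(p,q)`-hybrid preferences. -/
def hybridDomain [NeZero m] (p q : Fin m) : Set (Pref m) := {P | IsHybridPref p q P}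

/-- `D` is a `(p,q)`-hybrid* domain. -/
def IsHybridStar [NeZero m] (D : Set (Pref m)) (p q : Fin m) : Prop :=
  D ⊆ hybridDomain p q ∧
  (∀ k : Fin m, k ≠ 0 → k ≠ lastAlt m →
      ∃ l, VertexPathBetween D Set.univ 0 (lastAlt m) l ∧ k ∈ l) ∧
  ((p : ℕ) + 1 < (q : ℕ) → ∀ a : Fin m, ¬ IsLeaf D (Set.Icc p q) a)

/-- A lottery over the alternatives. -/
def Lottery (m : ℕ) : Type :=
  {f : Fin m → ℝ // (∀ a, 0 ≤ f a) ∧ ∑ a, f a = 1}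

/-- The probability that a lottery assigns to a set of alternatives. -/
def Lottery.prob (lam : Lottery m) (B : Finset (Fin m)) : ℝ := ∑ a ∈ B, lam.1 a

/-- The support of a lottery. -/
def Lottery.supp (lam : Lottery m) : Finset (Fin m) :=
  Finset.univ.filter (fun a => 0 < lam.1 a)

/-- The degenerate lottery on `a`. -/
def degLottery (a : Fin m) : Lottery m :=
  ⟨fun b => if b = a then 1 else 0,
   fun b => by by_cases h : b = a <;> simp [h],
   by simp⟩

/-- A profile of preferences drawn from the domain `D`. -/
abbrev Profile (D : Set (Pref m)) (n : ℕ) := Fin n → D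

/-- The top-ranked alternative of a preference in the domain. -/
def topOf [NeZero m] {D : Set (Pref m)} (P : D) : Fin m := P.1 0

def Unanimous [NeZero m] {D : Set (Pref m)} (φ : Profile D n → Lottery m) : Prop :=
  ∀ (P : Profile D n) (a : Fin m), (∀ i, topOf (P i) = a) → φ P = degLottery a

/-- The total probability of the `k` top-ranked alternatives of `P` under `lam`. -/
def topSum (lam : Lottery m) (P : Pref m) (k : ℕ) : ℝ :=
  ∑ t ∈ Finset.univ.filter (fun t : Fin m => (t : ℕ) < k), lam.1 (P t)

/-- Strategy-proofness: truth-telling first-order stochastically dominates any unilateral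
misrepresentation. -/
def StrategyProof {D : Set (Pref m)} (φ : Profile D n → Lottery m) : Prop :=
  ∀ (i : Fin n) (P : Profile D n) (Pi' : D) (k : ℕ), k ≤ m →
    topSum (φ (Function.update P i Pi')) (P i).1 k ≤ topSum (φ P) (P i).1 k

def TopsOnly [NeZero m] {D : Set (Pref m)} (φ : Profile D n → Lottery m) : Prop :=
  ∀ P P' : Profile D n, (∀ i, topOf (P i) = topOf (P' i)) → φ P = φ P'

def Anonymous {D : Set (Pref m)} (φ : Profile D n → Lottery m) : Prop :=
  ∀ (P : Profile D n) (σ : Equiv.Perm (Fin n)), φ (P ∘ σ) = φ P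

/-- The interval `[a_k, a_m]`. -/
def upSet (k : Fin m) : Finset (Fin m) := Finset.univ.filter (fun a => k ≤ a)

/-- The interval `[a_1, a_k]`. -/
def downSet (k : Fin m) : Finset (Fin m) := Finset.univ.filter (fun a => a ≤ k)

/-- The interval `[a_p, a_q]`. -/
def midSet (p q : Fin m) : Finset (Fin m) := Finset.univ.filter (fun a => p ≤ a ∧ a ≤ q)

/-- `S(k,P)`: the voters whose preference top is not to the left of `a_k`. -/
def voterSet [NeZero m] {D : Set (Pref m)} (P : Profile D n) (k : Fin m) : Finset (Fin n) :=
  Finset.univ.filter (fun i => k ≤ topOf (P i))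

/-- `β_{S(k,P)}([a_k, a_m])`, with the convention that it is `0` for `k = m`. -/
def tailProb [NeZero m] {D : Set (Pref m)} (β : Finset (Fin n) → Lottery m)
    (P : Profile D n) (k : ℕ) : ℝ :=
  if h : k < m then (β (voterSet P ⟨k, h⟩)).prob (upSet ⟨k, h⟩) else 0

def BallotUnanimity [NeZero m] (β : Finset (Fin n) → Lottery m) : Prop :=
  β Finset.univ = degLottery (lastAlt m) ∧ β ∅ = degLottery 0

def BallotMonotone (β : Finset (Fin n) → Lottery m) : Prop :=
  ∀ S T : Finset (Fin n), S ⊂ T →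
    ∀ k : Fin m, (β S).prob (upSet k) ≤ (β T).prob (upSet k)

/-- `φ` is a probabilistic fixed ballot rule with probabilistic ballots `β`. -/
def IsPFBRWith [NeZero m] {D : Set (Pref m)} (φ : Profile D n → Lottery m)
    (β : Finset (Fin n) → Lottery m) : Prop :=
  BallotUnanimity β ∧ BallotMonotone β ∧
  ∀ (P : Profile D n) (k : Fin m),
    (φ P).1 k = tailProb β P (k : ℕ) - tailProb β P ((k : ℕ) + 1)

def IsPFBR [NeZero m] {D : Set (Pref m)} (φ : Profile D n → Lottery m) : Prop :=
  ∃ β, IsPFBRWith φ β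

/-- The constrained random-dictatorship condition w.r.t. `a_p` and `a_q`. -/
def ConstrainedRD (p q : Fin m) (β : Finset (Fin n) → Lottery m) : Prop :=
  ∃ ε : Fin n → ℝ, (∀ i, 0 ≤ ε i) ∧ ∑ i, ε i = 1 ∧
    ∀ S : Finset (Fin n),
      (β S).prob (upSet q) = ∑ i ∈ S, ε i ∧
      (β S).prob (downSet p) = ∑ i ∈ Sᶜ, ε i

/-- The constrained random-dictatorship condition w.r.t. `a_p` and `a_q` with every
conditional dictatorial coefficient equal to `1/n`. -/
def ConstrainedRDUniform (p q : Fin m) (β : Finset (Fin n) → Lottery m) : Prop :=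
  ∀ S : Finset (Fin n),
    (β S).prob (upSet q) = (S.card : ℝ) / (n : ℝ) ∧
    (β S).prob (downSet p) = ((Sᶜ : Finset (Fin n)).card : ℝ) / (n : ℝ)

/-- Anonymity at the level of probabilistic ballots. -/
def BallotAnonymous (β : Finset (Fin n) → Lottery m) : Prop :=
  ∀ S S' : Finset (Fin n), S.Nonempty → S'.Nonempty → S.card = S'.card → β S = β S'

/-- Per-capita monotonicity w.r.t. `a_p` and `a_q`. -/
def PerCapitaMonotone (p q : Fin m) (β : Finset (Fin n) → Lottery m) : Prop :=
  ∀ S S' : Finset (Fin n), S.Nonempty → S ⊂ S' → S' ⊂ Finset.univ →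
    (∀ t : Fin m, q ≤ t →
      (β S).prob (upSet t) / (S.card : ℝ) ≤ (β S').prob (upSet t) / (S'.card : ℝ)) ∧
    (∀ s : Fin m, s ≤ p →
      (β Sᶜ).prob (downSet s) / (S.card : ℝ) ≤ (β S'ᶜ).prob (downSet s) / (S'.card : ℝ))

/-- Decomposability: `φ` is a mixture of finitely many unanimous and strategy-proof
deterministic social choice functions. -/
def Decomposable [NeZero m] {D : Set (Pref m)} (φ : Profile D n → Lottery m) : Prop :=
  ∃ (r : ℕ) (f : Fin r → (Profile D n → Fin m)) (α : Fin r → ℝ),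
    (∀ k, 0 < α k) ∧ ∑ k, α k = 1 ∧
    (∀ k, Unanimous (fun P => degLottery (f k P)) ∧
          StrategyProof (fun P => degLottery (f k P))) ∧
    ∀ (P : Profile D n) (a : Fin m),
      (φ P).1 a = ∑ k, α k * (if f k P = a then 1 else 0)

/-- `b̂_S^R`: the `≺`-minimum of `supp(β_S) ∩ R` (with the convention `b̂_N^R = a_m`). -/
def bR [NeZero m] (β : Finset (Fin n) → Lottery m) (q : Fin m) (S : Finset (Fin n)) : Fin m :=
  if h : ((β S).supp ∩ upSet q).Nonempty then ((β S).supp ∩ upSet q).min' h else lastAlt m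

/-- `b̂_S^L`: the `≺`-maximum of `supp(β_S) ∩ L` (with the convention `b̂_∅^L = a_1`). -/
def bL [NeZero m] (β : Finset (Fin n) → Lottery m) (p : Fin m) (S : Finset (Fin n)) : Fin m :=
  if h : ((β S).supp ∩ downSet p).Nonempty then ((β S).supp ∩ downSet p).max' h else 0

/-- `α = min over nonempty S ⊂ N of min(β_S(b̂_S^R)/|S|, β_S(b̂_S^L)/(n-|S|))`. -/
def alphaVal [NeZero m] (β : Finset (Fin n) → Lottery m) (p q : Fin m) : ℝ :=
  sInf {x : ℝ | ∃ S : Finset (Fin n), S.Nonempty ∧ S ≠ Finset.univ ∧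
    x = min ((β S).1 (bR β q S) / (S.card : ℝ))
            ((β S).1 (bL β p S) / ((n : ℝ) - (S.card : ℝ)))}

/-- `γ_S = (|S|/n) e_{b̂_S^R} + ((n-|S|)/n) e_{b̂_S^L}`, pointwise. -/
def gammaFun [NeZero m] (β : Finset (Fin n) → Lottery m) (p q : Fin m)
    (S : Finset (Fin n)) (a : Fin m) : ℝ :=
  ((S.card : ℝ) / (n : ℝ)) * (if a = bR β q S then 1 else 0)
  + (((n : ℝ) - (S.card : ℝ)) / (n : ℝ)) * (if a = bL β p S then 1 else 0)

/-- The max-min formula `f(P) = max_{S ⊆ N} min({r_1(P_j) : j ∈ S} ∪ {b_S})`. -/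
def fbrOutcome [NeZero m] {D : Set (Pref m)} (b : Finset (Fin n) → Fin m)
    (P : Profile D n) : Fin m :=
  Finset.univ.sup' Finset.univ_nonempty
    (fun S : Finset (Fin n) =>
      (insert (b S) (S.image (fun j => topOf (P j)))).inf' (Finset.insert_nonempty _ _) id)

/-- `f` is a `(p,q)`-fixed ballot rule with deterministic ballots `b` and constrained
dictator `i`. -/
def IsFBRWith [NeZero m] {D : Set (Pref m)} (p q : Fin m) (f : Profile D n → Fin m)
    (b : Finset (Fin n) → Fin m) (i : Fin n) : Prop :=
  b Finset.univ = lastAlt m ∧ b ∅ = 0 ∧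
  (∀ S T : Finset (Fin n), S ⊂ T → b S ≤ b T) ∧
  (∀ S : Finset (Fin n), (i ∈ S → q ≤ b S) ∧ (i ∉ S → b S ≤ p)) ∧
  ∀ P : Profile D n, f P = fbrOutcome b P

end PFBRPaper

open PFBRPaper

/-!
Removing `α n γ_S` from `β_S` takes the mass `α |S|` off the innermost supported point of the right
block and `α (n - |S|)` off the innermost supported point of the left block, so the per-capita mass
lost by a block is always `α`.

Only per-capita monotonicity could be destroyed. The right-hand inequality for `S ⊂ S'` is at risk
when the tail `[a_t, a_m]` contains the removed point of `S'` but not that of `S`. In that case the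
tail carries the whole right block of `S'`, while for `S` it misses the point `b̂_S^R`, whose
per-capita mass is at least `α`. Since the per-capita mass of the right block is monotone too, the
inequality between the tails holds with a slack of `α` to start with.

Monotonicity then comes for free: on the outer blocks it follows from per-capita monotonicity, and
between `a_p` and `a_q` tail probabilities are fixed by the constrained random-dictatorship
condition. A coalition attaining the minimum `α` loses a support point altogether.
-/

namespace PFBRPaper

variable {m n : ℕ}

theorem cast_card_compl (S : Finset (Fin n)) : (#Sᶜ : ℝ) = n - #S := by
  rw [eq_sub_iff_add_eq', ← Nat.cast_add, card_add_card_compl, Fintype.card_fin]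

theorem cast_card_compl_pos {S : Finset (Fin n)} (h : S ≠ univ) : (0 : ℝ) < #Sᶜ := by
  simpa [card_pos, nonempty_iff_ne_empty] using h

theorem le_of_div_le_div_of_le {K : Type*} [Field K] [LinearOrder K] [IsStrictOrderedRing K]
    {x y s t : K} (hs : 0 < s) (hst : s ≤ t) (hy : 0 ≤ y) (h : x / s ≤ y / t) : x ≤ y :=
  (div_le_div_iff_of_pos_right hs).1 (h.trans (div_le_div_of_nonneg_left hy hs hst))

theorem mem_upSet {k a : Fin m} : a ∈ upSet k ↔ k ≤ a := by simp [upSet]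

theorem mem_downSet {k a : Fin m} : a ∈ downSet k ↔ a ≤ k := by simp [downSet]

theorem upSet_anti {s t : Fin m} (h : s ≤ t) : upSet t ⊆ upSet s := fun _ ha =>
  mem_upSet.2 (h.trans (mem_upSet.1 ha))

theorem downSet_mono {s t : Fin m} (h : s ≤ t) : downSet s ⊆ downSet t := fun _ ha =>
  mem_downSet.2 ((mem_downSet.1 ha).trans h)

theorem downSet_subset_compl_upSet {s t : Fin m} (h : s < t) : downSet s ⊆ (upSet t)ᶜ :=
  fun _ ha => mem_compl.2 fun ha' => ((mem_downSet.1 ha).trans_lt h).not_ge (mem_upSet.1 ha')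

theorem upSet_zero [NeZero m] : upSet (0 : Fin m) = univ := by
  ext a
  simp [mem_upSet]

theorem compl_upSet_eq_downSet_pred [NeZero m] {k : Fin m} (hk : k ≠ 0) :
    (upSet k)ᶜ = downSet (Order.pred k) := by
  have hmin : ¬IsMin k := isMin_iff_eq_bot.not.2 hk
  ext a
  rw [mem_compl, mem_upSet, mem_downSet, not_le, Order.le_pred_iff_of_not_isMin hmin]

theorem le_lastAlt [NeZero m] (a : Fin m) : a ≤ lastAlt m :=
  Fin.le_def.2 (Nat.le_sub_one_of_lt a.2)

namespace Lottery

theorem mem_supp {l : Lottery m} {a : Fin m} : a ∈ l.supp ↔ 0 < l.1 a := by simp [supp]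

theorem prob_nonneg (l : Lottery m) (B : Finset (Fin m)) : 0 ≤ l.prob B :=
  sum_nonneg fun a _ => l.2.1 a

theorem prob_mono (l : Lottery m) {B C : Finset (Fin m)} (h : B ⊆ C) : l.prob B ≤ l.prob C :=
  sum_le_sum_of_subset_of_nonneg h fun a _ _ => l.2.1 a

theorem prob_univ (l : Lottery m) : l.prob univ = 1 := l.2.2

theorem prob_le_one (l : Lottery m) (B : Finset (Fin m)) : l.prob B ≤ 1 :=
  l.prob_univ ▸ l.prob_mono (subset_univ B)

theorem prob_eq_one_sub_prob_compl (l : Lottery m) (B : Finset (Fin m)) :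
    l.prob B = 1 - l.prob Bᶜ := by
  rw [eq_sub_iff_add_eq, ← l.prob_univ]
  exact sum_add_sum_compl B l.1

theorem prob_add_apply_le (l : Lottery m) {B C : Finset (Fin m)} {a : Fin m} (hCB : C ⊆ B)
    (haB : a ∈ B) (haC : a ∉ C) : l.prob C + l.1 a ≤ l.prob B := by
  have h := l.prob_mono (insert_subset haB hCB)
  rwa [prob, sum_insert haC, add_comm] at h

theorem prob_eq_of_supp_inter_subset (l : Lottery m) {B C : Finset (Fin m)} (hCB : C ⊆ B)
    (h : l.supp ∩ B ⊆ C) : l.prob C = l.prob B :=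
  sum_subset hCB fun a haB haC =>
    le_antisymm (not_lt.1 fun ha => haC (h (mem_inter.2 ⟨mem_supp.2 ha, haB⟩))) (l.2.1 a)

theorem prob_degLottery (a : Fin m) (B : Finset (Fin m)) :
    (degLottery a).prob B = if a ∈ B then 1 else 0 :=
  sum_ite_eq' B a _

theorem supp_degLottery (a : Fin m) : (degLottery a).supp = {a} := by
  ext b
  rw [mem_supp, mem_singleton, degLottery]
  by_cases h : b = a <;> simp [h]

theorem perCapita_sub_le {l l' : Lottery m} {B C : Finset (Fin m)} {b b' : Fin m}
    {s s' α : ℝ} (hs : 0 < s) (hs' : 0 < s') (hα : 0 ≤ α) (hCB : C ⊆ B)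
    (hB : l.prob B / s ≤ l'.prob B / s') (hC : l.prob C / s ≤ l'.prob C / s')
    (hb : b ∈ B) (hαb : α * s ≤ l.1 b) (hb' : b' ∈ C → l'.supp ∩ B ⊆ C) :
    (l.prob C - α * s * if b ∈ C then 1 else 0) / s ≤
      (l'.prob C - α * s' * if b' ∈ C then 1 else 0) / s' := by
  have hdiv : ∀ x y z : ℝ, 0 < y → (x - α * y * z) / y = x / y - α * z := by
    intro x y z hy
    field_simp
  rw [hdiv _ _ _ hs, hdiv _ _ _ hs']
  by_cases hb'C : b' ∈ C
  · by_cases hbC : b ∈ C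
    · simpa only [if_pos hbC, if_pos hb'C] using sub_le_sub_right hC _
    · rw [if_neg hbC, if_pos hb'C, mul_zero, sub_zero, mul_one]
      calc l.prob C / s ≤ (l.prob B - α * s) / s := by
            gcongr
            linarith [l.prob_add_apply_le hCB hb hbC]
        _ = l.prob B / s - α := by field_simp
        _ ≤ l'.prob B / s' - α := sub_le_sub_right hB α
        _ = l'.prob C / s' - α := by rw [l'.prob_eq_of_supp_inter_subset hCB (hb' hb'C)]
  · have : 0 ≤ α * if b ∈ C then 1 else 0 := by positivity
    rw [if_neg hb'C]
    linarith

end Lottery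

section Monotonicity

variable {p q : Fin m} {β : Finset (Fin n) → Lottery m} {S T : Finset (Fin n)} {t : Fin m}

theorem PerCapitaMonotone.prob_upSet_le (h : PerCapitaMonotone p q β) (hS : S.Nonempty)
    (hST : S ⊂ T) (hT : T ≠ univ) (ht : q ≤ t) :
    (β S).prob (upSet t) ≤ (β T).prob (upSet t) :=
  le_of_div_le_div_of_le (Nat.cast_pos.2 hS.card_pos) (Nat.cast_le.2 (card_le_card hST.1))
    ((β T).prob_nonneg _) ((h S T hS hST (ssubset_univ_iff.2 hT)).1 t ht)

theorem PerCapitaMonotone.prob_downSet_le (h : PerCapitaMonotone p q β) (hS : S.Nonempty)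
    (hST : S ⊂ T) (hT : T ≠ univ) (ht : t ≤ p) :
    (β T).prob (downSet t) ≤ (β S).prob (downSet t) := by
  have hTc : Tᶜ.Nonempty := by simpa [nonempty_iff_ne_empty] using hT
  have hSc : Sᶜ ⊂ univ := by simpa [ssubset_univ_iff] using hS.ne_empty
  have hTS : Tᶜ ⊂ Sᶜ := compl_ssubset_compl.2 hST
  have hdiv := (h Tᶜ Sᶜ hTc hTS hSc).2 t ht
  rw [compl_compl, compl_compl] at hdiv
  exact le_of_div_le_div_of_le (Nat.cast_pos.2 hTc.card_pos) (Nat.cast_le.2 (card_le_card hTS.1))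
    ((β S).prob_nonneg _) hdiv

theorem ConstrainedRDUniform.prob_upSet_eq (h : ConstrainedRDUniform p q β) (hn : 0 < n)
    (hpt : p < t) (htq : t ≤ q) (S : Finset (Fin n)) :
    (β S).prob (upSet t) = #S / n := by
  apply le_antisymm
  · calc (β S).prob (upSet t) = 1 - (β S).prob (upSet t)ᶜ := (β S).prob_eq_one_sub_prob_compl _
      _ ≤ 1 - (β S).prob (downSet p) :=
        sub_le_sub_left ((β S).prob_mono (downSet_subset_compl_upSet hpt)) 1
      _ = #S / n := by
        rw [(h S).2, cast_card_compl]
        field_simp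
        exact sub_sub_cancel _ _
  · rw [← (h S).1]
    exact (β S).prob_mono (upSet_anti htq)

theorem BallotUnanimity.ballotMonotone [NeZero m] (hu : BallotUnanimity β)
    (hcrd : ConstrainedRDUniform p q β) (hpcm : PerCapitaMonotone p q β) : BallotMonotone β := by
  intro S T hST k
  rcases eq_or_ne k 0 with rfl | hk
  · rw [upSet_zero, Lottery.prob_univ, Lottery.prob_univ]
  rcases eq_or_ne T univ with rfl | hT
  · rw [hu.1, Lottery.prob_degLottery, if_pos (mem_upSet.2 (le_lastAlt k))]
    exact (β S).prob_le_one _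
  rcases S.eq_empty_or_nonempty with rfl | hS
  · rw [hu.2, Lottery.prob_degLottery, if_neg (by simpa [mem_upSet] using hk)]
    exact (β T).prob_nonneg _
  rcases le_or_gt q k with hqk | hkq
  · exact hpcm.prob_upSet_le hS hST hT hqk
  rcases le_or_gt k p with hkp | hpk
  · rw [(β S).prob_eq_one_sub_prob_compl, (β T).prob_eq_one_sub_prob_compl,
      compl_upSet_eq_downSet_pred hk]
    exact sub_le_sub_left (hpcm.prob_downSet_le hS hST hT ((Order.pred_le k).trans hkp)) 1
  · have hn : 0 < n := Fin.pos hS.choose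
    rw [hcrd.prob_upSet_eq hn hpk hkq.le, hcrd.prob_upSet_eq hn hpk hkq.le]
    gcongr

end Monotonicity

variable [NeZero m] {β : Finset (Fin n) → Lottery m} {p q : Fin m} {α : ℝ}

section InnermostPoints

variable (β p q) (S : Finset (Fin n))

theorem le_bR : q ≤ bR β q S := by
  unfold bR
  split_ifs with h
  · exact mem_upSet.1 (mem_inter.1 (min'_mem _ h)).2
  · exact le_lastAlt q

theorem bL_le : bL β p S ≤ p := by
  unfold bL
  split_ifs with h
  · exact mem_downSet.1 (mem_inter.1 (max'_mem _ h)).2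
  · exact Fin.zero_le p

variable {β p q S}

theorem bR_le {a : Fin m} (ha : a ∈ (β S).supp ∩ upSet q) : bR β q S ≤ a := by
  rw [bR, dif_pos ⟨a, ha⟩]
  exact min'_le _ _ ha

theorem le_bL {a : Fin m} (ha : a ∈ (β S).supp ∩ downSet p) : a ≤ bL β p S := by
  rw [bL, dif_pos ⟨a, ha⟩]
  exact le_max' _ _ ha

theorem bL_lt_bR (hpq : p < q) : bL β p S < bR β q S :=
  (bL_le β p S).trans_lt (hpq.trans_le (le_bR β q S))

theorem BallotUnanimity.bR_univ (hu : BallotUnanimity β) : bR β q univ = lastAlt m := by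
  unfold bR
  split_ifs with h
  · simpa [hu.1, Lottery.supp_degLottery] using (mem_inter.1 (min'_mem _ h)).1
  · rfl

theorem BallotUnanimity.bL_empty (hu : BallotUnanimity β) : bL β p ∅ = 0 := by
  unfold bL
  split_ifs with h
  · simpa [hu.2, Lottery.supp_degLottery] using (mem_inter.1 (max'_mem _ h)).1
  · rfl

end InnermostPoints

section Gamma

theorem mul_gammaFun (β : Finset (Fin n) → Lottery m) (p q : Fin m) (α : ℝ)
    (S : Finset (Fin n)) (a : Fin m) :
    n * α * gammaFun β p q S a =
      α * #S * (if a = bR β q S then 1 else 0) + α * #Sᶜ * (if a = bL β p S then 1 else 0) := by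
  rw [gammaFun, cast_card_compl]
  rcases Nat.eq_zero_or_pos n with rfl | hn
  · simp [eq_empty_of_isEmpty S]
  · field_simp

theorem mul_sum_gammaFun (β : Finset (Fin n) → Lottery m) (p q : Fin m) (α : ℝ)
    (S : Finset (Fin n)) (B : Finset (Fin m)) :
    n * α * ∑ a ∈ B, gammaFun β p q S a =
      α * #S * (if bR β q S ∈ B then 1 else 0) + α * #Sᶜ * (if bL β p S ∈ B then 1 else 0) := by
  simp_rw [mul_sum, mul_gammaFun]
  rw [sum_add_distrib, ← mul_sum, ← mul_sum, sum_ite_eq', sum_ite_eq']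

theorem mul_gammaFun_nonneg (hα : 0 ≤ α) (S : Finset (Fin n)) (a : Fin m) :
    0 ≤ n * α * gammaFun β p q S a := by
  rw [mul_gammaFun]
  positivity

theorem mul_card_le_mul_gammaFun_bR (hα : 0 ≤ α) (S : Finset (Fin n)) :
    α * #S ≤ n * α * gammaFun β p q S (bR β q S) := by
  rw [mul_gammaFun, if_pos rfl, mul_one]
  exact le_add_of_nonneg_right (by positivity)

theorem mul_card_compl_le_mul_gammaFun_bL (hα : 0 ≤ α) (S : Finset (Fin n)) :
    α * #Sᶜ ≤ n * α * gammaFun β p q S (bL β p S) := by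
  rw [mul_gammaFun, if_pos rfl, mul_one]
  exact le_add_of_nonneg_left (by positivity)

theorem mul_gammaFun_le (hpq : p < q) {S : Finset (Fin n)}
    (hR : α * #S ≤ (β S).1 (bR β q S)) (hL : α * #Sᶜ ≤ (β S).1 (bL β p S)) (a : Fin m) :
    n * α * gammaFun β p q S a ≤ (β S).1 a := by
  have hLR : bL β p S < bR β q S := bL_lt_bR hpq
  rw [mul_gammaFun]
  rcases eq_or_ne a (bR β q S) with rfl | haR
  · simpa [hLR.ne'] using hR
  rcases eq_or_ne a (bL β p S) with rfl | haL
  · simpa [hLR.ne] using hL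
  · simpa [haR, haL] using (β S).2.1 a

end Gamma

section Refinement

/-- The weights `α` such that every ballot `β_S` dominates `α n γ_S` pointwise without being
exhausted by it, so that `(β_S - α n γ_S) / (1 - α n)` is again a lottery. -/
structure IsRemovableWeight (β : Finset (Fin n) → Lottery m) (p q : Fin m) (α : ℝ) : Prop where
  nonneg : 0 ≤ α
  mul_lt_one : n * α < 1
  mul_gammaFun_le : ∀ S a, n * α * gammaFun β p q S a ≤ (β S).1 a

theorem sum_sub_mul_gammaFun_div (β : Finset (Fin n) → Lottery m) (p q : Fin m) (α : ℝ)
    (S : Finset (Fin n)) (B : Finset (Fin m)) :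
    ∑ a ∈ B, ((β S).1 a - n * α * gammaFun β p q S a) / (1 - n * α) =
      ((β S).prob B - (α * #S * (if bR β q S ∈ B then 1 else 0) +
        α * #Sᶜ * (if bL β p S ∈ B then 1 else 0))) / (1 - n * α) := by
  rw [← sum_div, sum_sub_distrib, ← mul_sum, mul_sum_gammaFun, Lottery.prob]

theorem IsRemovableWeight.mul_card_le (h : IsRemovableWeight β p q α) (S : Finset (Fin n)) :
    α * #S ≤ (β S).1 (bR β q S) :=
  (mul_card_le_mul_gammaFun_bR h.nonneg S).trans (h.mul_gammaFun_le S _)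

theorem IsRemovableWeight.mul_card_compl_le (h : IsRemovableWeight β p q α)
    (S : Finset (Fin n)) : α * #Sᶜ ≤ (β S).1 (bL β p S) :=
  (mul_card_compl_le_mul_gammaFun_bL h.nonneg S).trans (h.mul_gammaFun_le S _)

theorem IsRemovableWeight.one_sub_pos (h : IsRemovableWeight β p q α) : 0 < 1 - n * α :=
  sub_pos.2 h.mul_lt_one

/-- The refined ballots `β̂_S = (β_S - α n γ_S) / (1 - α n)`, for any removable weight `α` rather
than only for the largest one. -/
def refinedBallot (h : IsRemovableWeight β p q α) (S : Finset (Fin n)) : Lottery m :=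
  ⟨fun a => ((β S).1 a - n * α * gammaFun β p q S a) / (1 - n * α),
    fun a => div_nonneg (sub_nonneg.2 (h.mul_gammaFun_le S a)) h.one_sub_pos.le, by
      rw [sum_sub_mul_gammaFun_div, Lottery.prob_univ, cast_card_compl,
        div_eq_one_iff_eq h.one_sub_pos.ne', if_pos (mem_univ _), if_pos (mem_univ _)]
      ring⟩

theorem refinedBallot_apply (h : IsRemovableWeight β p q α) (S : Finset (Fin n)) (a : Fin m) :
    (refinedBallot h S).1 a = ((β S).1 a - n * α * gammaFun β p q S a) / (1 - n * α) :=
  rfl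

theorem prob_upSet_refinedBallot (h : IsRemovableWeight β p q α) (hpq : p < q)
    (S : Finset (Fin n)) {t : Fin m} (ht : q ≤ t) :
    (refinedBallot h S).prob (upSet t) =
      ((β S).prob (upSet t) - α * #S * if bR β q S ∈ upSet t then 1 else 0) / (1 - n * α) := by
  have hL : bL β p S ∉ upSet t := fun hmem =>
    (mem_upSet.1 hmem).not_gt ((bL_le β p S).trans_lt (hpq.trans_le ht))
  rw [Lottery.prob, refinedBallot, sum_sub_mul_gammaFun_div, if_neg hL, mul_zero, add_zero]

theorem prob_downSet_refinedBallot (h : IsRemovableWeight β p q α) (hpq : p < q)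
    (S : Finset (Fin n)) {t : Fin m} (ht : t ≤ p) :
    (refinedBallot h S).prob (downSet t) =
      ((β S).prob (downSet t) - α * #Sᶜ * if bL β p S ∈ downSet t then 1 else 0) /
        (1 - n * α) := by
  have hR : bR β q S ∉ downSet t := fun hmem =>
    (mem_downSet.1 hmem).not_gt (ht.trans_lt (hpq.trans_le (le_bR β q S)))
  rw [Lottery.prob, refinedBallot, sum_sub_mul_gammaFun_div, if_neg hR, mul_zero, zero_add]

theorem ballotUnanimity_refinedBallot (h : IsRemovableWeight β p q α) (hu : BallotUnanimity β) :
    BallotUnanimity (refinedBallot h) := by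
  have hne := h.one_sub_pos.ne'
  constructor <;> refine Subtype.ext (funext fun a => ?_)
  · rw [refinedBallot_apply, mul_gammaFun, hu.bR_univ, hu.1]
    by_cases ha : a = lastAlt m
    · simpa [degLottery, ha, mul_comm α] using div_self hne
    · simp [degLottery, ha]
  · rw [refinedBallot_apply, mul_gammaFun, hu.bL_empty, hu.2]
    by_cases ha : a = 0
    · simpa [degLottery, ha, mul_comm α] using div_self hne
    · simp [degLottery, ha]

theorem constrainedRDUniform_refinedBallot (h : IsRemovableWeight β p q α) (hn : 0 < n)
    (hpq : p < q) (hcrd : ConstrainedRDUniform p q β) :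
    ConstrainedRDUniform p q (refinedBallot h) := by
  intro S
  have hne := h.one_sub_pos.ne'
  rw [prob_upSet_refinedBallot h hpq S le_rfl, prob_downSet_refinedBallot h hpq S le_rfl,
    if_pos (mem_upSet.2 (le_bR β q S)), if_pos (mem_downSet.2 (bL_le β p S)),
    (hcrd S).1, (hcrd S).2, div_eq_iff hne, div_eq_iff hne]
  constructor <;> field_simp

theorem perCapitaMonotone_refinedBallot (h : IsRemovableWeight β p q α) (hpq : p < q)
    (hpcm : PerCapitaMonotone p q β) : PerCapitaMonotone p q (refinedBallot h) := by
  intro S T hS hST hT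
  have hs : (0 : ℝ) < #S := Nat.cast_pos.2 hS.card_pos
  have ht : (0 : ℝ) < #T := Nat.cast_pos.2 (hS.mono hST.1).card_pos
  obtain ⟨hR, hL⟩ := hpcm S T hS hST hT
  refine ⟨fun t hqt => ?_, fun t htp => ?_⟩
  · rw [prob_upSet_refinedBallot h hpq S hqt, prob_upSet_refinedBallot h hpq T hqt,
      div_right_comm, div_right_comm _ _ (#T : ℝ)]
    refine div_le_div_of_nonneg_right ?_ h.one_sub_pos.le
    exact Lottery.perCapita_sub_le hs ht h.nonneg (upSet_anti hqt) (hR q le_rfl) (hR t hqt)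
      (mem_upSet.2 (le_bR β q S)) (h.mul_card_le S)
      fun hb _ ha => mem_upSet.2 ((mem_upSet.1 hb).trans (bR_le ha))
  · have hαb := h.mul_card_compl_le Sᶜ
    rw [compl_compl] at hαb
    rw [prob_downSet_refinedBallot h hpq Sᶜ htp, prob_downSet_refinedBallot h hpq Tᶜ htp,
      compl_compl, compl_compl, div_right_comm, div_right_comm _ _ (#T : ℝ)]
    refine div_le_div_of_nonneg_right ?_ h.one_sub_pos.le
    exact Lottery.perCapita_sub_le hs ht h.nonneg (downSet_mono htp) (hL p le_rfl) (hL t htp)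
      (mem_downSet.2 (bL_le β p Sᶜ)) hαb
      fun hb _ ha => mem_downSet.2 ((le_bL ha).trans (mem_downSet.1 hb))

theorem supp_refinedBallot_subset (h : IsRemovableWeight β p q α) (S : Finset (Fin n)) :
    (refinedBallot h S).supp ⊆ (β S).supp := by
  intro a ha
  rw [Lottery.mem_supp, refinedBallot_apply, div_pos_iff_of_pos_right h.one_sub_pos] at ha
  exact Lottery.mem_supp.2 ((mul_gammaFun_nonneg h.nonneg S a).trans_lt (sub_pos.1 ha))

theorem supp_refinedBallot_ssubset (h : IsRemovableWeight β p q α) {S : Finset (Fin n)}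
    {a : Fin m} (ha : a ∈ (β S).supp) (hγ : (β S).1 a ≤ n * α * gammaFun β p q S a) :
    (refinedBallot h S).supp ⊂ (β S).supp := by
  refine (ssubset_iff_of_subset (supp_refinedBallot_subset h S)).2 ⟨a, ha, ?_⟩
  rw [Lottery.mem_supp, refinedBallot_apply, not_lt]
  exact div_nonpos_of_nonpos_of_nonneg (sub_nonpos.2 hγ) h.one_sub_pos.le

end Refinement

section Alpha

/-- The quantity `min (β_S(b̂_S^R) / |S|) (β_S(b̂_S^L) / (n - |S|))` whose minimum over the nonempty
proper coalitions is `α`, with `n - |S|` encoded as `#Sᶜ`. -/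
def coalitionWeight (β : Finset (Fin n) → Lottery m) (p q : Fin m) (S : Finset (Fin n)) : ℝ :=
  min ((β S).1 (bR β q S) / #S) ((β S).1 (bL β p S) / #Sᶜ)

theorem alphaVal_eq_sInf_image (β : Finset (Fin n) → Lottery m) (p q : Fin m) :
    alphaVal β p q = sInf (coalitionWeight β p q '' {S | S.Nonempty ∧ S ≠ univ}) := by
  unfold alphaVal coalitionWeight
  congr 1
  ext x
  simp only [cast_card_compl, Set.mem_ofPred_eq, Set.mem_image, and_assoc, eq_comm]

theorem alphaVal_le_coalitionWeight {S : Finset (Fin n)} (hS : S.Nonempty) (hS' : S ≠ univ) :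
    alphaVal β p q ≤ coalitionWeight β p q S := by
  rw [alphaVal_eq_sInf_image]
  exact csInf_le (Set.toFinite _).bddBelow (Set.mem_image_of_mem _ ⟨hS, hS'⟩)

theorem exists_alphaVal_eq_coalitionWeight (h : 0 < alphaVal β p q) :
    ∃ S : Finset (Fin n), S.Nonempty ∧ S ≠ univ ∧ alphaVal β p q = coalitionWeight β p q S := by
  rw [alphaVal_eq_sInf_image] at h ⊢
  have hne : (coalitionWeight β p q '' {S | S.Nonempty ∧ S ≠ univ}).Nonempty :=
    Set.nonempty_iff_ne_empty.2 fun he => h.ne' (by rw [he, Real.sInf_empty])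
  obtain ⟨S, ⟨hS, hS'⟩, hval⟩ := hne.csInf_mem (Set.toFinite _)
  exact ⟨S, hS, hS', hval.symm⟩

theorem alphaVal_mul_card_le (hu : BallotUnanimity β) (hα : n * alphaVal β p q ≤ 1)
    (S : Finset (Fin n)) : alphaVal β p q * #S ≤ (β S).1 (bR β q S) := by
  rcases S.eq_empty_or_nonempty with rfl | hS
  · simpa using (β ∅).2.1 _
  rcases eq_or_ne S univ with rfl | hS'
  · simpa [hu.bR_univ, hu.1, degLottery, mul_comm] using hα
  · exact (le_div_iff₀ (Nat.cast_pos.2 hS.card_pos)).1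
      ((alphaVal_le_coalitionWeight hS hS').trans (min_le_left _ _))

theorem alphaVal_mul_card_compl_le (hu : BallotUnanimity β) (hα : n * alphaVal β p q ≤ 1)
    (S : Finset (Fin n)) : alphaVal β p q * #Sᶜ ≤ (β S).1 (bL β p S) := by
  rcases S.eq_empty_or_nonempty with rfl | hS
  · simpa [hu.bL_empty, hu.2, degLottery, mul_comm] using hα
  rcases eq_or_ne S univ with rfl | hS'
  · simpa using (β univ).2.1 _
  · exact (le_div_iff₀ (cast_card_compl_pos hS')).1
      ((alphaVal_le_coalitionWeight hS hS').trans (min_le_right _ _))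

theorem isRemovableWeight_alphaVal (hpq : p < q) (hu : BallotUnanimity β)
    (hα0 : 0 ≤ alphaVal β p q) (hα1 : n * alphaVal β p q < 1) :
    IsRemovableWeight β p q (alphaVal β p q) where
  nonneg := hα0
  mul_lt_one := hα1
  mul_gammaFun_le S := mul_gammaFun_le hpq (alphaVal_mul_card_le hu hα1.le S)
    (alphaVal_mul_card_compl_le hu hα1.le S)

theorem exists_supp_refinedBallot_ssubset (h : IsRemovableWeight β p q (alphaVal β p q))
    (hα : 0 < alphaVal β p q) :
    ∃ S : Finset (Fin n), S.Nonempty ∧ S ≠ univ ∧ (refinedBallot h S).supp ⊂ (β S).supp := by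
  obtain ⟨S, hS, hS', hval⟩ := exists_alphaVal_eq_coalitionWeight hα
  have hs : (0 : ℝ) < #S := Nat.cast_pos.2 hS.card_pos
  have hs' : (0 : ℝ) < #Sᶜ := cast_card_compl_pos hS'
  refine ⟨S, hS, hS', ?_⟩
  rcases min_choice ((β S).1 (bR β q S) / #S) ((β S).1 (bL β p S) / #Sᶜ) with hmin | hmin
  · have hR : alphaVal β p q * #S = (β S).1 (bR β q S) :=
      (eq_div_iff hs.ne').1 (hval.trans hmin)
    exact supp_refinedBallot_ssubset h (Lottery.mem_supp.2 (hR ▸ mul_pos hα hs))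
      (hR.ge.trans (mul_card_le_mul_gammaFun_bR hα.le S))
  · have hL : alphaVal β p q * #Sᶜ = (β S).1 (bL β p S) :=
      (eq_div_iff hs'.ne').1 (hval.trans hmin)
    exact supp_refinedBallot_ssubset h (Lottery.mem_supp.2 (hL ▸ mul_pos hα hs'))
      (hL.ge.trans (mul_card_compl_le_mul_gammaFun_bL hα.le S))

end Alpha

end PFBRPaper

theorem refinement_step_general {m n : ℕ} [NeZero m] {p q : Fin m} (hpq : p < q)
    {β : Finset (Fin n) → Lottery m} (hu : BallotUnanimity β) (hcrd : ConstrainedRDUniform p q β)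
    (hpcm : PerCapitaMonotone p q β) (hα1 : 0 < alphaVal β p q)
    (hα2 : alphaVal β p q < 1 / (n : ℝ)) :
    ∃ βhat : Finset (Fin n) → Lottery m,
      (∀ (S : Finset (Fin n)) (a : Fin m),
        (βhat S).1 a = ((β S).1 a - (n : ℝ) * alphaVal β p q * gammaFun β p q S a)
          / (1 - (n : ℝ) * alphaVal β p q)) ∧
      BallotUnanimity βhat ∧ BallotMonotone βhat ∧
      ConstrainedRDUniform p q βhat ∧ PerCapitaMonotone p q βhat ∧
      (∀ S : Finset (Fin n), S.Nonempty → S ≠ Finset.univ →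
        (βhat S).supp ⊆ (β S).supp) ∧
      (∃ S : Finset (Fin n), S.Nonempty ∧ S ≠ Finset.univ ∧
        (βhat S).supp ⊂ (β S).supp) := by
  have hn : (0 : ℝ) < n := one_div_pos.1 (hα1.trans hα2)
  have h := isRemovableWeight_alphaVal hpq hu hα1.le ((lt_div_iff₀' hn).1 hα2)
  have hu' := ballotUnanimity_refinedBallot h hu
  have hcrd' := constrainedRDUniform_refinedBallot h (Nat.cast_pos.1 hn) hpq hcrd
  have hpcm' := perCapitaMonotone_refinedBallot h hpq hpcm
  exact ⟨refinedBallot h, refinedBallot_apply h, hu', hu'.ballotMonotone hcrd' hpcm', hcrd', hpcm',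
    fun S _ _ => supp_refinedBallot_subset h S, exists_supp_refinedBallot_ssubset h hα1⟩

/-- The refinement step: when `0 < α < 1/n`, the refined ballots
`β̂_S = (β_S - αn γ_S)/(1 - αn)` are lotteries satisfying ballot unanimity, monotonicity,
the uniform constrained random-dictatorship condition and per-capita monotonicity, and
their supports refine those of `β` (strictly for at least one nonempty proper coalition). -/
theorem refinement_step (m n : ℕ) [NeZero m] (hm : 3 ≤ m) (hn : 2 ≤ n)
    (p q : Fin m) (hgap1 : (p : ℕ) + 1 < (q : ℕ)) (hgap2 : (q : ℕ) - (p : ℕ) < m - 1)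
    (φ : Profile (hybridDomain p q) n → Lottery m)
    (β : Finset (Fin n) → Lottery m) (hβ : IsPFBRWith φ β)
    (hanon : BallotAnonymous β) (hcrd : ConstrainedRDUniform p q β)
    (hpcm : PerCapitaMonotone p q β)
    (hα1 : 0 < alphaVal β p q) (hα2 : alphaVal β p q < 1 / (n : ℝ)) :
    ∃ βhat : Finset (Fin n) → Lottery m,
      (∀ (S : Finset (Fin n)) (a : Fin m),
        (βhat S).1 a = ((β S).1 a - (n : ℝ) * alphaVal β p q * gammaFun β p q S a)
          / (1 - (n : ℝ) * alphaVal β p q)) ∧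
      BallotUnanimity βhat ∧ BallotMonotone βhat ∧
      ConstrainedRDUniform p q βhat ∧ PerCapitaMonotone p q βhat ∧
      (∀ S : Finset (Fin n), S.Nonempty → S ≠ Finset.univ →
        (βhat S).supp ⊆ (β S).supp) ∧
      (∃ S : Finset (Fin n), S.Nonempty ∧ S ≠ Finset.univ ∧
        (βhat S).supp ⊂ (β S).supp) := by
  exact refinement_step_general (Fin.lt_def.2 (by omega)) hβ.1 hcrd hpcm hα1 hα2
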